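/- Cross-term differential inequality (first inequality of (pf:ene-low-4) in the proof of Lemma 3.2): for every ξ ∈ ℝ³ and every solution (â, û) of the Fourier-transformed linearized system with forcing (f̂, ĝ), one has for all t ≥ 0: d/dt Re⟨iε â(t) ξ, û(t)⟩ + |ξ|²|â(t)|² ≤ ε|ξ|·|(f̂(t), ĝ(t))|·|(â(t), û(t))| + |Ω|ε|ξ|·|â(t)|·‖û(t)‖ + |ξ|²‖û(t)‖² + ε|ξ|³·|â(t)|·‖û(t)‖. -/

import Mathlib

noncomputable section
open scoped BigOperators

/-- Hermitian inner product on `ℂ³`: `⟨v,w⟩ = ∑ₖ vₖ · conj(wₖ)`. -/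
def hinner (v w : Fin 3 → ℂ) : ℂ := ∑ k, v k * (starRingEnd ℂ) (w k)

/-- Squared norm `‖w‖² = ∑ₖ |wₖ|²` on `ℂ³`. -/
def vnormSq (w : Fin 3 → ℂ) : ℝ := ∑ k, ‖w k‖ ^ 2

/-- Norm `‖w‖` on `ℂ³`. -/
def vnorm (w : Fin 3 → ℂ) : ℝ := Real.sqrt (vnormSq w)

/-- `|(z,w)| = √(|z|² + ‖w‖²)` for `z ∈ ℂ`, `w ∈ ℂ³`. -/
def pairNorm (z : ℂ) (w : Fin 3 → ℂ) : ℝ := Real.sqrt (‖z‖ ^ 2 + vnormSq w)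

/-- Cross product with `e₃ = (0,0,1)`: `e₃ × w = (−w₂, w₁, 0)`. -/
def cross3 (w : Fin 3 → ℂ) : Fin 3 → ℂ := ![-(w 1), w 0, 0]

/-- `|ξ|² = ∑ₖ ξₖ²` for `ξ ∈ ℝ³`. -/
def xiNormSq (ξ : Fin 3 → ℝ) : ℝ := ∑ k, (ξ k) ^ 2

/-- Euclidean norm `|ξ|` for `ξ ∈ ℝ³`. -/
def xiNorm (ξ : Fin 3 → ℝ) : ℝ := Real.sqrt (xiNormSq ξ)

/-- `ξ·w = ∑ₖ ξₖ wₖ` for `ξ ∈ ℝ³` regarded in `ℂ³` and `w ∈ ℂ³`. -/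
def xiDot (ξ : Fin 3 → ℝ) (w : Fin 3 → ℂ) : ℂ := ∑ k, (ξ k : ℂ) * w k

/-- The Fourier-transformed linearized compressible Navier–Stokes–Coriolis system
at time `t` with data `(â, û)`, derivatives `(â', û')` and forcing `(f̂, ĝ)`:
`â′ + (i/ε)(ξ·û) = f̂` and
`û′ + μ|ξ|²û + (μ+μ′)(ξ·û)ξ + Ω(e₃ × û) + (i/ε)âξ = ĝ`. -/
def SystemAt (μ μ' ε Ω : ℝ) (ξ : Fin 3 → ℝ)
    (a a' : ℝ → ℂ) (u u' : ℝ → Fin 3 → ℂ)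
    (f : ℝ → ℂ) (g : ℝ → Fin 3 → ℂ) (t : ℝ) : Prop :=
  (a' t + (Complex.I / (ε : ℂ)) * xiDot ξ (u t) = f t) ∧
  (∀ k, u' t k + ((μ * xiNormSq ξ : ℝ) : ℂ) * u t k
      + (((μ + μ') : ℝ) : ℂ) * xiDot ξ (u t) * (ξ k : ℂ)
      + ((Ω : ℝ) : ℂ) * cross3 (u t) k
      + (Complex.I / (ε : ℂ)) * a t * (ξ k : ℂ) = g t k)

/-- `κ(|ξ|, Ωε) = |ξ|⁴/(Ω²ε² + |ξ|²)`. -/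
def kappa (Ω ε : ℝ) (ξ : Fin 3 → ℝ) : ℝ :=
  xiNorm ξ ^ 4 / (Ω ^ 2 * ε ^ 2 + xiNorm ξ ^ 2)

/-!
Let `X(z, w) = Re⟨iεzξ, w⟩`, which is real-bilinear, so that `d/dt X(â, û) = X(â′, û) + X(â, û′)`.
On inserting the equations the factor `ε` cancels the `1/ε` of the two acoustic terms: the pressure
`(i/ε)âξ` produces the damping `-|ξ|²|â|²` and the divergence `(i/ε)(ξ·û)` produces `|ξ·û|²`.
The two viscous terms combine to `-(2μ + μ′)|ξ|² X(â, û)`, because pairing with `ξ` sees only the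
component of `û` along `ξ`. What remains is estimated by Cauchy-Schwarz.
-/

open Complex WithLp
open scoped ComplexConjugate InnerProductSpace

section ProductNorm

variable {E F : Type*} [SeminormedAddCommGroup E] [SeminormedAddCommGroup F]

theorem norm_fst_mul_norm_snd_add_le (p q : WithLp 2 (E × F)) :
    ‖p.fst‖ * ‖q.snd‖ + ‖q.fst‖ * ‖p.snd‖ ≤ ‖p‖ * ‖q‖ := by
  apply (sq_le_sq₀ (by positivity) (by positivity)).1
  rw [mul_pow, prod_norm_sq_eq_of_L2, prod_norm_sq_eq_of_L2]
  linarith [sq_nonneg (‖p.fst‖ * ‖q.fst‖ - ‖p.snd‖ * ‖q.snd‖)]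

end ProductNorm

section Hilbert

variable {H : Type*} [NormedAddCommGroup H] [InnerProductSpace ℂ H]

/-- The cross term `(z, w) ↦ Re⟨iεzξ, w⟩` as a real-bilinear form. Mathlib's inner product is
conjugate-linear in its first argument, hence the order of the arguments below. -/
def crossTerm (ε : ℝ) (ξ : H) : ℂ →ₗ[ℝ] H →ₗ[ℝ] ℝ :=
  LinearMap.mk₂ ℝ (fun z w => (⟪w, (I * ε * z) • ξ⟫_ℂ).re)
    (fun z z' w => by rw [mul_add, add_smul, inner_add_right, add_re])
    (fun c z w => by rw [mul_smul_comm, smul_assoc, inner_smul_right_eq_smul, smul_re])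
    (fun z w w' => by rw [inner_add_left, add_re])
    (fun c z w => by rw [inner_smul_left_eq_smul, smul_re])

variable {ε : ℝ} {ξ : H}

theorem crossTerm_apply (z : ℂ) (w : H) :
    crossTerm ε ξ z w = (⟪w, (I * ε * z) • ξ⟫_ℂ).re := rfl

theorem abs_crossTerm_le (z : ℂ) (w : H) :
    |crossTerm ε ξ z w| ≤ |ε| * ‖ξ‖ * (‖z‖ * ‖w‖) :=
  calc |crossTerm ε ξ z w| ≤ ‖⟪w, (I * ε * z) • ξ⟫_ℂ‖ := abs_re_le_norm _
    _ ≤ ‖w‖ * ‖(I * ε * z) • ξ‖ := norm_inner_le_norm _ _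
    _ = |ε| * ‖ξ‖ * (‖z‖ * ‖w‖) := by
      simp only [norm_smul, norm_mul, norm_I, norm_real, Real.norm_eq_abs]
      ring

theorem hasDerivAt_crossTerm {a : ℝ → ℂ} {a' : ℂ} {u : ℝ → H} {u' : H} {t : ℝ}
    (ha : HasDerivAt a a' t) (hu : HasDerivAt u u' t) :
    HasDerivAt (fun s => crossTerm ε ξ (a s) (u s))
      (crossTerm ε ξ a' (u t) + crossTerm ε ξ (a t) u') t :=
  reCLM.hasFDerivAt.comp_hasDerivAt t
    (hu.inner ℂ ((ha.const_mul (I * (ε : ℂ))).smul_const ξ))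

theorem crossTerm_smul_self (z c : ℂ) :
    crossTerm ε ξ z (c • ξ) = ‖ξ‖ ^ 2 * (I * ε * z * conj c).re := by
  have hξ : ⟪ξ, ξ⟫_ℂ = (‖ξ‖ ^ 2 : ℝ) := by
    rw [inner_self_eq_norm_sq_to_K]
    norm_cast
  rw [crossTerm_apply, inner_smul_left, inner_smul_right, hξ, ← re_ofReal_mul]
  ring_nf

theorem crossTerm_inner_smul_self (z : ℂ) (w : H) :
    crossTerm ε ξ z (⟪ξ, w⟫_ℂ • ξ) = ‖ξ‖ ^ 2 * crossTerm ε ξ z w := by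
  rw [crossTerm_smul_self, crossTerm_apply, inner_conj_symm, inner_smul_right]

theorem crossTerm_I_div_mul_smul_self (hε : ε ≠ 0) (z : ℂ) :
    crossTerm ε ξ z ((I / ε * z) • ξ) = ‖ξ‖ ^ 2 * ‖z‖ ^ 2 := by
  have hε' : (ε : ℂ) ≠ 0 := ofReal_ne_zero.mpr hε
  have hcoeff : I * ε * z * conj (I / ε * z) = (‖z‖ ^ 2 : ℝ) := by
    rw [map_mul, map_div₀, conj_I, conj_ofReal, ofReal_pow, ← mul_conj']
    field_simp
    rw [I_sq]
    ring
  rw [crossTerm_smul_self, hcoeff, ofReal_re]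

theorem crossTerm_I_div_mul_inner (hε : ε ≠ 0) (w : H) :
    crossTerm ε ξ (I / ε * ⟪ξ, w⟫_ℂ) w = -‖⟪ξ, w⟫_ℂ‖ ^ 2 := by
  have hε' : (ε : ℂ) ≠ 0 := ofReal_ne_zero.mpr hε
  have hcoeff : I * ε * (I / ε * ⟪ξ, w⟫_ℂ) = -⟪ξ, w⟫_ℂ := by
    field_simp
    rw [I_sq, neg_one_mul]
  rw [crossTerm_apply, hcoeff, inner_smul_right, neg_mul, ← inner_conj_symm w ξ, mul_conj',
    ← ofReal_pow, neg_re, ofReal_re]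

/-- The Fourier-transformed linearized system at a single time, in an arbitrary complex inner
product space: `⟪ξ, u⟫` stands for `ξ·û` and the map `J` for the Coriolis operator `e₃ × ·`. -/
structure LinearizedSystem (μ μ' ε Ω : ℝ) (J : H → H) (ξ : H) (a a' f : ℂ) (u u' g : H) :
    Prop where
  mass : a' + I / ε * ⟪ξ, u⟫_ℂ = f
  momentum : u' + (μ * ‖ξ‖ ^ 2) • u + (μ + μ') • ⟪ξ, u⟫_ℂ • ξ + Ω • J u + (I / ε * a) • ξ = g

variable {μ μ' Ω : ℝ} {J : H → H}

theorem LinearizedSystem.crossTerm_balance {a a' f : ℂ} {u u' g : H} (hε : ε ≠ 0)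
    (h : LinearizedSystem μ μ' ε Ω J ξ a a' f u u' g) :
    crossTerm ε ξ a' u + crossTerm ε ξ a u' + ‖ξ‖ ^ 2 * ‖a‖ ^ 2 =
      crossTerm ε ξ f u + crossTerm ε ξ a g + ‖⟪ξ, u⟫_ℂ‖ ^ 2
        - (2 * μ + μ') * ‖ξ‖ ^ 2 * crossTerm ε ξ a u - Ω * crossTerm ε ξ a (J u) := by
  simp only [← h.mass, ← h.momentum, map_add, LinearMap.add_apply, map_smul, smul_eq_mul,
    crossTerm_inner_smul_self, crossTerm_I_div_mul_smul_self hε, crossTerm_I_div_mul_inner hε]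
  ring

theorem crossTerm_add_crossTerm_le (a f : ℂ) (u g : H) :
    crossTerm ε ξ f u + crossTerm ε ξ a g ≤
      |ε| * ‖ξ‖ * ‖toLp 2 (f, g)‖ * ‖toLp 2 (a, u)‖ :=
  calc crossTerm ε ξ f u + crossTerm ε ξ a g
      ≤ |ε| * ‖ξ‖ * (‖f‖ * ‖u‖) + |ε| * ‖ξ‖ * (‖a‖ * ‖g‖) :=
        add_le_add (le_of_abs_le (abs_crossTerm_le f u)) (le_of_abs_le (abs_crossTerm_le a g))
    _ = |ε| * ‖ξ‖ * (‖f‖ * ‖u‖ + ‖a‖ * ‖g‖) := by ring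
    _ ≤ |ε| * ‖ξ‖ * (‖toLp 2 (f, g)‖ * ‖toLp 2 (a, u)‖) := by
        gcongr
        exact norm_fst_mul_norm_snd_add_le (toLp 2 (f, g)) (toLp 2 (a, u))
    _ = |ε| * ‖ξ‖ * ‖toLp 2 (f, g)‖ * ‖toLp 2 (a, u)‖ := by ring

theorem neg_mul_crossTerm_le (c : ℝ) (z : ℂ) (w : H) :
    -(c * crossTerm ε ξ z w) ≤ |c| * (|ε| * ‖ξ‖ * (‖z‖ * ‖w‖)) := by
  grw [← abs_crossTerm_le, ← abs_mul]
  exact neg_le_abs _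

theorem fourier_cross_term_inequality_general (hε : ε ≠ 0) (hJ : ∀ w, ‖J w‖ ≤ ‖w‖)
    {a : ℝ → ℂ} {u : ℝ → H} {a' f : ℂ} {u' g : H} {t D : ℝ}
    (ha : HasDerivAt a a' t) (hu : HasDerivAt u u' t)
    (hsys : LinearizedSystem μ μ' ε Ω J ξ (a t) a' f (u t) u' g)
    (hD : HasDerivAt (fun s => crossTerm ε ξ (a s) (u s)) D t) :
    D + ‖ξ‖ ^ 2 * ‖a t‖ ^ 2
      ≤ |ε| * ‖ξ‖ * ‖toLp 2 (f, g)‖ * ‖toLp 2 (a t, u t)‖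
        + |Ω| * |ε| * ‖ξ‖ * ‖a t‖ * ‖u t‖
        + ‖ξ‖ ^ 2 * ‖u t‖ ^ 2
        + |2 * μ + μ'| * |ε| * ‖ξ‖ ^ 3 * ‖a t‖ * ‖u t‖ := by
  have hdiv : ‖⟪ξ, u t⟫_ℂ‖ ^ 2 ≤ ‖ξ‖ ^ 2 * ‖u t‖ ^ 2 := by
    grw [norm_inner_le_norm, mul_pow]
  have hvisc := neg_mul_crossTerm_le (ε := ε) (ξ := ξ) ((2 * μ + μ') * ‖ξ‖ ^ 2) (a t) (u t)
  rw [abs_mul, abs_of_nonneg (sq_nonneg ‖ξ‖)] at hvisc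
  have hcor : -(Ω * crossTerm ε ξ (a t) (J (u t))) ≤ |Ω| * (|ε| * ‖ξ‖ * (‖a t‖ * ‖u t‖)) := by
    grw [neg_mul_crossTerm_le, hJ]
  rw [hD.unique (hasDerivAt_crossTerm ha hu), hsys.crossTerm_balance hε]
  linarith [crossTerm_add_crossTerm_le (ε := ε) (ξ := ξ) (a t) f (u t) g]

end Hilbert

section Coordinates

/-- A real frequency vector regarded as an element of the Hilbert space `ℂ³`. -/
def complexFreq (ξ : Fin 3 → ℝ) : EuclideanSpace ℂ (Fin 3) := toLp 2 fun k => (ξ k : ℂ)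

/-- The Coriolis operator `w ↦ e₃ × w` on the Hilbert space `ℂ³`. -/
def coriolis (w : EuclideanSpace ℂ (Fin 3)) : EuclideanSpace ℂ (Fin 3) := toLp 2 (cross3 w)

variable (ξ : Fin 3 → ℝ) (z : ℂ) (w : Fin 3 → ℂ)

theorem vnormSq_eq_norm_sq : vnormSq w = ‖toLp 2 w‖ ^ 2 :=
  (EuclideanSpace.norm_sq_eq (toLp 2 w)).symm

theorem vnorm_eq_norm : vnorm w = ‖toLp 2 w‖ :=
  (EuclideanSpace.norm_eq (toLp 2 w)).symm

theorem pairNorm_eq_norm : pairNorm z w = ‖toLp 2 (z, toLp 2 w)‖ := by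
  rw [pairNorm, vnormSq_eq_norm_sq, prod_norm_eq_of_L2]
  rfl

theorem xiNormSq_eq_norm_sq : xiNormSq ξ = ‖complexFreq ξ‖ ^ 2 := by
  simp [xiNormSq, complexFreq, EuclideanSpace.norm_sq_eq]

theorem xiNorm_eq_norm : xiNorm ξ = ‖complexFreq ξ‖ := by
  rw [xiNorm, xiNormSq_eq_norm_sq, Real.sqrt_sq (norm_nonneg _)]

theorem xiDot_eq_inner : xiDot ξ w = ⟪complexFreq ξ, toLp 2 w⟫_ℂ := by
  simp [xiDot, complexFreq, EuclideanSpace.inner_toLp_toLp, dotProduct, mul_comm]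

theorem re_hinner_eq_crossTerm (ε : ℝ) :
    (hinner (fun k => I * (ε : ℂ) * z * (ξ k : ℂ)) w).re =
      crossTerm ε (complexFreq ξ) z (toLp 2 w) := by
  simp only [hinner, crossTerm_apply, complexFreq, ← toLp_smul, EuclideanSpace.inner_toLp_toLp,
    dotProduct, Pi.smul_apply, smul_eq_mul, Pi.star_apply, RCLike.star_def]

theorem norm_coriolis_le (v : EuclideanSpace ℂ (Fin 3)) : ‖coriolis v‖ ≤ ‖v‖ := by
  apply (sq_le_sq₀ (norm_nonneg _) (norm_nonneg v)).1
  calc ‖coriolis v‖ ^ 2 = ‖v 1‖ ^ 2 + ‖v 0‖ ^ 2 := by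
        simp [EuclideanSpace.norm_sq_eq, coriolis, cross3, Fin.sum_univ_three]
    _ ≤ ‖v 1‖ ^ 2 + ‖v 0‖ ^ 2 + ‖v 2‖ ^ 2 := le_add_of_nonneg_right (sq_nonneg _)
    _ = ‖v‖ ^ 2 := by
        rw [EuclideanSpace.norm_sq_eq, Fin.sum_univ_three]
        ring

theorem SystemAt.linearizedSystem {μ μ' ε Ω : ℝ} {ξ : Fin 3 → ℝ} {a a' f : ℝ → ℂ}
    {u u' g : ℝ → Fin 3 → ℂ} {t : ℝ} (h : SystemAt μ μ' ε Ω ξ a a' u u' f g t) :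
    LinearizedSystem μ μ' ε Ω coriolis (complexFreq ξ) (a t) (a' t) (f t)
      (toLp 2 (u t)) (toLp 2 (u' t)) (toLp 2 (g t)) where
  mass := by simpa only [← xiDot_eq_inner] using h.1
  momentum := by
    rw [← xiDot_eq_inner, ← xiNormSq_eq_norm_sq]
    ext k
    refine Eq.trans ?_ (h.2 k)
    simp [complexFreq, coriolis, mul_assoc]

end Coordinates

/-- Cross-term differential inequality (first inequality of (pf:ene-low-4) in the proof of
Lemma 3.2): `d/dt Re⟨iε â ξ, û⟩ + |ξ|²|â|²
  ≤ ε|ξ||(f̂,ĝ)||(â,û)| + |Ω|ε|ξ||â|‖û‖ + |ξ|²‖û‖² + ε|ξ|³|â|‖û‖`. -/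
theorem fourier_cross_term_inequality
    (μ μ' ε Ω : ℝ) (hμ : 0 < μ) (hμ' : 2 * μ + μ' = 1) (hε : 0 < ε)
    (ξ : Fin 3 → ℝ)
    (a a' f : ℝ → ℂ) (u u' g : ℝ → Fin 3 → ℂ)
    (ha : ∀ t : ℝ, 0 ≤ t → HasDerivAt a (a' t) t)
    (hu : ∀ t : ℝ, 0 ≤ t → HasDerivAt u (u' t) t)
    (hf : ContinuousOn f (Set.Ici 0))
    (hg : ContinuousOn g (Set.Ici 0))
    (hsys : ∀ t : ℝ, 0 ≤ t → SystemAt μ μ' ε Ω ξ a a' u u' f g t) :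
    ∀ t : ℝ, 0 ≤ t → ∀ D : ℝ,
      HasDerivAt
        (fun s => (hinner (fun k => Complex.I * (ε : ℂ) * a s * (ξ k : ℂ)) (u s)).re) D t →
      D + xiNormSq ξ * ‖a t‖ ^ 2
        ≤ ε * xiNorm ξ * pairNorm (f t) (g t) * pairNorm (a t) (u t)
          + |Ω| * ε * xiNorm ξ * ‖a t‖ * vnorm (u t)
          + xiNormSq ξ * vnormSq (u t)
          + ε * xiNorm ξ ^ 3 * ‖a t‖ * vnorm (u t) := by
  intro t ht D hD
  have hu' : HasDerivAt (fun s => toLp 2 (u s)) (toLp 2 (u' t)) t :=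
    (PiLp.hasFDerivAt_toLp 2 (u t)).comp_hasDerivAt t (hu t ht)
  simp only [re_hinner_eq_crossTerm] at hD
  simpa only [xiNormSq_eq_norm_sq, xiNorm_eq_norm, vnormSq_eq_norm_sq, vnorm_eq_norm,
    pairNorm_eq_norm, hμ', abs_one, one_mul, abs_of_pos hε] using
    fourier_cross_term_inequality_general hε.ne' norm_coriolis_le (ha t ht) hu'
      (hsys t ht).linearizedSystem hD
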